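/- arXiv:2310.11694 — 2 statements merged into one kernel-verified Lean document; each statement's English description precedes it below -/
import Mathlib

section
/- Suppose k = (k₁,k₃) ∈ ℤ² with |k| ≥ 1 and |k|² = k₁² + k₃², and suppose φ, w : [−1,1] → ℂ satisfy (∂_y² − |k|²)φ = w with φ(±1) = 0, with φ ∈ H²(−1,1) and w ∈ L²(−1,1). Then: (i) 2( ‖φ' + 2yφ/(1−y²)‖²_{L²} + |k|²‖φ‖²_{L²} ) ≤ Re ∫_{−1}^{1} ((1−y²)w + 2φ) w̄ dy; (ii) ‖φ'‖²_{L²} + 2|k|²‖φ‖²_{L²} ≤ (8/|k|² + 1) Re ∫_{−1}^{1} ((1−y²)w + 2φ) w̄ dy. -/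
open Real MeasureTheory

noncomputable section

/-- `|k| = sqrt (k₁² + k₃²)` for `k = (k₁,k₃) ∈ ℤ²`. -/
def kabs (k₁ k₃ : ℤ) : ℝ := Real.sqrt ((k₁ : ℝ) ^ 2 + (k₃ : ℝ) ^ 2)

/-- continuous and bounded on the open interval -/
def BC (f : ℝ → ℝ) : Prop :=
  ContinuousOn f (Set.Ioo (-1) 1) ∧ ∃ C, ∀ y ∈ Set.Ioo (-1:ℝ) 1, |f y| ≤ C

lemma BC.add {f g : ℝ → ℝ} (hf : BC f) (hg : BC g) : BC (fun y => f y + g y) := by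
  obtain ⟨h1, C, h2⟩ := hf
  obtain ⟨h3, D, h4⟩ := hg
  exact ⟨h1.add h3, C + D, fun y hy => (abs_add_le _ _).trans (add_le_add (h2 y hy) (h4 y hy))⟩

lemma BC.mul {f g : ℝ → ℝ} (hf : BC f) (hg : BC g) : BC (fun y => f y * g y) := by
  obtain ⟨h1, C, h2⟩ := hf
  obtain ⟨h3, D, h4⟩ := hg
  refine ⟨h1.mul h3, C * D, fun y hy => ?_⟩
  rw [abs_mul]
  exact mul_le_mul (h2 y hy) (h4 y hy) (abs_nonneg _) ((abs_nonneg _).trans (h2 y hy))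

lemma BC.of_cont {f : ℝ → ℝ} (hf : Continuous f) : BC f := by
  obtain ⟨C, hC⟩ := (isCompact_Icc (a := (-1:ℝ)) (b := 1)).exists_bound_of_continuousOn hf.continuousOn
  exact ⟨hf.continuousOn, C, fun y hy => hC y ⟨hy.1.le, hy.2.le⟩⟩

lemma BC.ii {f : ℝ → ℝ} (hf : BC f) : IntervalIntegrable f volume (-1) 1 := by
  obtain ⟨h1, C, h2⟩ := hf
  rw [intervalIntegrable_iff_integrableOn_Ioo_of_le (by norm_num)]
  refine IntegrableOn.of_bound (C := C) (by simp)
    (h1.aestronglyMeasurable measurableSet_Ioo) ?_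
  filter_upwards [ae_restrict_mem measurableSet_Ioo] with y hy
  exact h2 y hy

lemma BC.div {p p' : ℝ → ℝ} (hp : ∀ y, HasDerivAt p (p' y) y) (hc : Continuous p')
    (h1 : p 1 = 0) (h2 : p (-1) = 0) : BC (fun y => p y / (1 - y ^ 2)) := by
  obtain ⟨C, hC⟩ := (isCompact_Icc (a := (-1:ℝ)) (b := 1)).exists_bound_of_continuousOn hc.continuousOn
  have hpc : Continuous p := continuous_iff_continuousAt.2 fun y => (hp y).continuousAt
  have hL : ∀ x ∈ Set.Icc (-1:ℝ) 1, ∀ y ∈ Set.Icc (-1:ℝ) 1, ‖p y - p x‖ ≤ C * ‖y - x‖ :=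
    fun x hx y hy => Convex.norm_image_sub_le_of_norm_hasDerivWithin_le (s := Set.Icc (-1:ℝ) 1)
      (fun z _ => (hp z).hasDerivWithinAt) hC (convex_Icc _ _) hx hy
  have hC0 : 0 ≤ C := (norm_nonneg _).trans (hC 0 (by norm_num))
  refine ⟨hpc.continuousOn.div (by fun_prop) fun y hy => ?_, C, fun y hy => ?_⟩
  · nlinarith [hy.1, hy.2]
  · have ha : 0 < 1 - y ^ 2 := by nlinarith [hy.1, hy.2]
    rw [abs_div, abs_of_pos ha, div_le_iff₀ ha]
    have e1 := hL 1 (by norm_num) y ⟨hy.1.le, hy.2.le⟩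
    have e2 := hL (-1) (by norm_num) y ⟨hy.1.le, hy.2.le⟩
    rw [h1, sub_zero, Real.norm_eq_abs, Real.norm_eq_abs, abs_of_nonpos (a := y - 1) (by linarith [hy.2])] at e1
    rw [h2, sub_zero, Real.norm_eq_abs, Real.norm_eq_abs, abs_of_nonneg (a := y - -1) (by linarith [hy.1])] at e2
    rcases le_total 0 y with h | h
    · refine e1.trans (mul_le_mul_of_nonneg_left ?_ hC0)
      nlinarith [hy.2]
    · refine e2.trans (mul_le_mul_of_nonneg_left ?_ hC0)
      nlinarith [hy.1]

lemma BC.tends {g p : ℝ → ℝ} (hg : BC g) (hp : Continuous p) {c : ℝ} (hc : p c = 0)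
    {l : Filter ℝ} (hl : l ≤ nhds c) (hI : Set.Ioo (-1:ℝ) 1 ∈ l) :
    Filter.Tendsto (fun y => p y * g y) l (nhds 0) := by
  obtain ⟨-, C, h⟩ := hg
  have h0 : Filter.Tendsto (fun y => |p y| * C) l (nhds 0) := by
    have : Filter.Tendsto (fun y => |p y| * C) (nhds c) (nhds (|p c| * C)) :=
      Continuous.tendsto (by fun_prop) c
    rw [hc, abs_zero, zero_mul] at this
    exact this.mono_left hl
  refine squeeze_zero_norm' ?_ h0
  filter_upwards [hI] with y hy
  rw [Real.norm_eq_abs, abs_mul]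
  exact mul_le_mul_of_nonneg_left (h y hy) (abs_nonneg _)

lemma integral_zero_of {F F' : ℝ → ℝ} (h : ∀ y ∈ Set.Ioo (-1:ℝ) 1, HasDerivAt F (F' y) y)
    (hi : BC F') 
    (ht : ∀ c : ℝ, (c = 1 ∨ c = -1) → ∀ l : Filter ℝ, l ≤ nhds c → Set.Ioo (-1:ℝ) 1 ∈ l →
      Filter.Tendsto F l (nhds 0)) : ∫ y in (-1:ℝ)..1, F' y = 0 := by
  have := intervalIntegral.integral_eq_sub_of_hasDerivAt_of_tendsto (by norm_num : (-1:ℝ) < 1) h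
    hi.ii (ht (-1) (Or.inr rfl) _ nhdsWithin_le_nhds (Ioo_mem_nhdsGT (by norm_num)))
    (ht 1 (Or.inl rfl) _ nhdsWithin_le_nhds (Ioo_mem_nhdsLT (by norm_num)))
  simpa using this

/-- real core -/
lemma core (K : ℝ) (hK : 0 < K) (p p' p'' q q' q'' : ℝ → ℝ)
    (hp : ∀ y, HasDerivAt p (p' y) y) (hp' : ∀ y, HasDerivAt p' (p'' y) y) (hp'' : Continuous p'')
    (hq : ∀ y, HasDerivAt q (q' y) y) (hq' : ∀ y, HasDerivAt q' (q'' y) y) (hq'' : Continuous q'')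
    (p1 : p 1 = 0) (p2 : p (-1) = 0) (q1 : q 1 = 0) (q2 : q (-1) = 0) (R : ℝ)
    (hR : R = ∫ y in (-1:ℝ)..1, (((1 - y^2) * (p'' y - K * p y) + 2 * p y) * (p'' y - K * p y)
      + ((1 - y^2) * (q'' y - K * q y) + 2 * q y) * (q'' y - K * q y))) :
    (2 * ((∫ y in (-1:ℝ)..1, ((p' y + 2 * y * (p y / (1 - y^2)))^2
        + (q' y + 2 * y * (q y / (1 - y^2)))^2))
      + K * ∫ y in (-1:ℝ)..1, ((p y)^2 + (q y)^2)) ≤ R) ∧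
    ((∫ y in (-1:ℝ)..1, ((p' y)^2 + (q' y)^2)) + 2 * K * (∫ y in (-1:ℝ)..1, ((p y)^2 + (q y)^2))
      ≤ (8 / K + 1) * R) := by
  have cp : Continuous p := continuous_iff_continuousAt.2 fun y => (hp y).continuousAt
  have cp' : Continuous p' := continuous_iff_continuousAt.2 fun y => (hp' y).continuousAt
  have cq : Continuous q := continuous_iff_continuousAt.2 fun y => (hq y).continuousAt
  have cq' : Continuous q' := continuous_iff_continuousAt.2 fun y => (hq' y).continuousAt
  obtain ⟨g, hg⟩ : ∃ g : ℝ → ℝ, g = fun y => p y / (1 - y ^ 2) := ⟨_, rfl⟩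
  obtain ⟨h, hh⟩ : ∃ h : ℝ → ℝ, h = fun y => q y / (1 - y ^ 2) := ⟨_, rfl⟩
  have bg : BC g := hg ▸ BC.div hp cp' p1 p2
  have bh : BC h := hh ▸ BC.div hq cq' q1 q2
  have ha : ∀ y ∈ Set.Ioo (-1:ℝ) 1, (1 - y^2) ≠ 0 := fun y hy => by nlinarith [hy.1, hy.2]
  have gp : ∀ y ∈ Set.Ioo (-1:ℝ) 1, p y = (1 - y^2) * g y := fun y hy => by
    have := ha y hy
    rw [hg]; field_simp
  have hq0 : ∀ y ∈ Set.Ioo (-1:ℝ) 1, q y = (1 - y^2) * h y := fun y hy => by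
    have := ha y hy
    rw [hh]; field_simp
  have dg : ∀ y ∈ Set.Ioo (-1:ℝ) 1, HasDerivAt (fun y => p y * g y)
      (2 * p' y * g y + 2 * y * g y ^ 2) y := fun y hy => by
    have h0 := ha y hy
    have h1 : HasDerivAt (fun y : ℝ => 1 - y ^ 2) (-(2 * y)) y := by
      simpa using ((hasDerivAt_id y).pow 2).const_sub 1
    have := (hp y).mul ((hp y).div h1 h0)
    rw [hg]
    refine this.congr_deriv ?_
    simp only [Pi.div_apply]
    field_simp
    ring
  have dh : ∀ y ∈ Set.Ioo (-1:ℝ) 1, HasDerivAt (fun y => q y * h y)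
      (2 * q' y * h y + 2 * y * h y ^ 2) y := fun y hy => by
    have h0 := ha y hy
    have h1 : HasDerivAt (fun y : ℝ => 1 - y ^ 2) (-(2 * y)) y := by
      simpa using ((hasDerivAt_id y).pow 2).const_sub 1
    have := (hq y).mul ((hq y).div h1 h0)
    rw [hh]
    refine this.congr_deriv ?_
    simp only [Pi.div_apply]
    field_simp
    ring
  -- three exact derivatives
  have I1 : ∫ y in (-1:ℝ)..1, (p' y * p' y + p y * p'' y + (q' y * q' y + q y * q'' y)) = 0 := by
    refine integral_zero_of (F := fun y => p y * p' y + q y * q' y)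
      (fun y _ => ((hp y).mul (hp' y)).add ((hq y).mul (hq' y))) (BC.of_cont (by fun_prop)) ?_
    intro c hc l hl hI
    have a1 : p c = 0 := by rcases hc with rfl | rfl <;> assumption
    have a2 : q c = 0 := by rcases hc with rfl | rfl <;> assumption
    simpa using ((BC.of_cont cp').tends cp a1 hl hI).add ((BC.of_cont cq').tends cq a2 hl hI)
  have B2 : BC (fun y => (2 * (p y * g y + q y * h y)) +
      2 * y * (2 * p' y * g y + 2 * y * (g y * g y) + (2 * q' y * h y + 2 * y * (h y * h y)))) := by
    have c2 : BC (fun _ => (2:ℝ)) := BC.of_cont (by fun_prop)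
    have cy : BC (fun y => 2 * y) := BC.of_cont (by fun_prop)
    have c3 : BC (fun y => 2 * p' y) := BC.of_cont (by fun_prop)
    have c4 : BC (fun y => 2 * q' y) := BC.of_cont (by fun_prop)
    exact (c2.mul (((BC.of_cont cp).mul bg).add ((BC.of_cont cq).mul bh))).add
      (cy.mul (((c3.mul bg).add (cy.mul (bg.mul bg))).add ((c4.mul bh).add (cy.mul (bh.mul bh)))))
  have I2 : ∫ y in (-1:ℝ)..1, ((2 * (p y * g y + q y * h y)) +
      2 * y * (2 * p' y * g y + 2 * y * (g y * g y) + (2 * q' y * h y + 2 * y * (h y * h y)))) = 0 := by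
    refine integral_zero_of (F := fun y => 2 * y * (p y * g y + q y * h y))
      (fun y hy => ?_) B2 ?_
    · have h1 : HasDerivAt (fun y : ℝ => 2 * y) 2 y := by
        simpa using (hasDerivAt_id y).const_mul 2
      refine (h1.mul ((dg y hy).add (dh y hy))).congr_deriv ?_
      simp only [Pi.add_apply]
      ring
    intro c hc l hl hI
    have a1 : p c = 0 := by rcases hc with rfl | rfl <;> assumption
    have a2 : q c = 0 := by rcases hc with rfl | rfl <;> assumption
    have t1 := (bg.tends cp a1 hl hI).add (bh.tends cq a2 hl hI)
    have t2 : Filter.Tendsto (fun y : ℝ => 2 * y) l (nhds (2 * c)) :=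
      (Continuous.tendsto (by fun_prop) c).mono_left hl
    simpa using t2.mul t1
  have I3 : ∫ y in (-1:ℝ)..1, ((p y ^ 2 + q y ^ 2) + 2 * y * (p y * p' y + q y * q' y)) = 0 := by
    refine integral_zero_of (F := fun y => y * (p y ^ 2 + q y ^ 2))
      (fun y _ => ?_) (BC.of_cont (by fun_prop)) ?_
    · refine ((hasDerivAt_id y).mul (((hp y).pow 2).add ((hq y).pow 2))).congr_deriv ?_
      simp
      ring
    intro c hc l hl hI
    have a1 : p c = 0 := by rcases hc with rfl | rfl <;> assumption
    have a2 : q c = 0 := by rcases hc with rfl | rfl <;> assumption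
    have : Filter.Tendsto (fun y => y * (p y ^ 2 + q y ^ 2)) (nhds c)
      (nhds (c * (p c ^ 2 + q c ^ 2))) := Continuous.tendsto (by fun_prop) c
    simpa [a1, a2] using this.mono_left hl
  have B1 := (BC.of_cont (f := fun y => (p' y * p' y + p y * p'' y + (q' y * q' y + q y * q'' y)))
    (by fun_prop)).ii
  have B3 := (BC.of_cont (f := fun y => (p y ^ 2 + q y ^ 2) + 2 * y * (p y * p' y + q y * q' y))
    (by fun_prop)).ii
  have BR := (BC.of_cont (f := fun y => (((1 - y^2) * (p'' y - K * p y) + 2 * p y) * (p'' y - K * p y)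
      + ((1 - y^2) * (q'' y - K * q y) + 2 * q y) * (q'' y - K * q y))) (by fun_prop)).ii
  have BY := (BC.of_cont (f := fun y => (p y)^2 + (q y)^2) (by fun_prop)).ii
  have BD := (BC.of_cont (f := fun y => (p' y)^2 + (q' y)^2) (by fun_prop)).ii
  have BX : IntervalIntegrable (fun y => (p' y + 2 * y * g y)^2
        + (q' y + 2 * y * h y)^2) volume (-1) 1 := by
    have cy : BC (fun y => 2 * y) := BC.of_cont (by fun_prop)
    have b1 := (BC.of_cont cp').add (cy.mul bg)
    have b2 := (BC.of_cont cq').add (cy.mul bh)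
    simpa only [sq] using ((b1.mul b1).add (b2.mul b2)).ii
  have hX : (∫ y in (-1:ℝ)..1, ((p' y + 2 * y * (p y / (1 - y^2)))^2
        + (q' y + 2 * y * (q y / (1 - y^2)))^2)) =
      ∫ y in (-1:ℝ)..1, ((p' y + 2 * y * g y)^2 + (q' y + 2 * y * h y)^2) := by
    rw [hg, hh]
  rw [hX]
  have X0 : 0 ≤ ∫ y in (-1:ℝ)..1, ((p' y + 2 * y * g y)^2 + (q' y + 2 * y * h y)^2) :=
    intervalIntegral.integral_nonneg (by norm_num) fun y _ => by positivity
  have Y0 : 0 ≤ ∫ y in (-1:ℝ)..1, ((p y)^2 + (q y)^2) :=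
    intervalIntegral.integral_nonneg (by norm_num) fun y _ => by positivity
  have M1 := intervalIntegral.integral_mono_on_of_le_Ioo (by norm_num : (-1:ℝ) ≤ 1)
    (((BX.const_mul 2).add (BY.const_mul (2 * K))).sub ((B1.const_mul 2).add (B2.ii.const_mul 2)))
    BR (fun y hy => by
      have e1 := gp y hy
      have e2 := hq0 y hy
      have a0 : 0 ≤ 1 - y^2 := by nlinarith [hy.1, hy.2]
      have := mul_nonneg a0 (add_nonneg (sq_nonneg (p'' y - K * p y + 2 * g y))
        (sq_nonneg (q'' y - K * q y + 2 * h y)))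
      rw [← sub_nonneg]
      refine this.trans_eq ?_
      rw [e1, e2]
      ring)
  have M2 := intervalIntegral.integral_mono_on_of_le_Ioo (by norm_num : (-1:ℝ) ≤ 1)
    ((BD.add (BY.const_mul (2 * K))).add (B2.ii.add (B3.const_mul (1/2))))
    ((BX.const_mul (3/2)).add (BY.const_mul (3 + 2 * K))) (fun y hy => by
      have e1 := gp y hy
      have e2 := hq0 y hy
      have a0 : 0 ≤ 1 - y^2 := by nlinarith [hy.1, hy.2]
      have := add_nonneg (add_nonneg (sq_nonneg (p' y + 2 * y * g y - y * p y))
        (sq_nonneg (q' y + 2 * y * h y - y * q y))) 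
        (mul_nonneg a0 (add_nonneg (sq_nonneg (p y)) (sq_nonneg (q y))))
      rw [← sub_nonneg]
      refine (mul_nonneg (by norm_num : (0:ℝ) ≤ 1/2) this).trans_eq ?_
      rw [e1, e2]
      ring)
  rw [intervalIntegral.integral_sub ((BX.const_mul 2).add (BY.const_mul (2 * K)))
     ((B1.const_mul 2).add (B2.ii.const_mul 2)),
    intervalIntegral.integral_add (BX.const_mul 2) (BY.const_mul (2 * K)),
    intervalIntegral.integral_add (B1.const_mul 2) (B2.ii.const_mul 2), 
    intervalIntegral.integral_const_mul, intervalIntegral.integral_const_mul,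
    intervalIntegral.integral_const_mul, intervalIntegral.integral_const_mul, I1, I2, ← hR] at M1
  rw [intervalIntegral.integral_add (BD.add (BY.const_mul (2 * K)))
     (B2.ii.add (B3.const_mul (1/2))),
    intervalIntegral.integral_add BD (BY.const_mul (2 * K)),
    intervalIntegral.integral_add B2.ii (B3.const_mul (1/2)),
    intervalIntegral.integral_add (BX.const_mul (3/2)) (BY.const_mul (3 + 2 * K)),
    intervalIntegral.integral_const_mul, intervalIntegral.integral_const_mul,
    intervalIntegral.integral_const_mul, intervalIntegral.integral_const_mul, I2, I3] at M2
  set X := ∫ y in (-1:ℝ)..1, ((p' y + 2 * y * g y)^2 + (q' y + 2 * y * h y)^2)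
  set Y := ∫ y in (-1:ℝ)..1, ((p y)^2 + (q y)^2)
  refine ⟨by linarith, ?_⟩
  have hR2 : 2 * (K * Y) ≤ R := by linarith
  have h8 : 16 * Y ≤ 8 / K * R := by
    have := mul_le_mul_of_nonneg_left hR2 (by positivity : 0 ≤ 8 / K)
    refine le_trans (le_of_eq ?_) this
    field_simp
    ring
  linarith

/-- **Positivity estimates for the Poiseuille nonlocal term** (Lemma B.4):
if `(∂_y² - |k|²)φ = w` with `φ(±1) = 0` and `|k| ≥ 1`, then
(i) `2(‖φ' + 2yφ/(1-y²)‖²_{L²} + |k|²‖φ‖²_{L²}) ≤ Re⟨(1-y²)w + 2φ, w⟩`, and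
(ii) `‖φ'‖²_{L²} + 2|k|²‖φ‖²_{L²} ≤ (8/|k|² + 1) Re⟨(1-y²)w + 2φ, w⟩`. -/
theorem poiseuille_positivity :
    ∀ (k₁ k₃ : ℤ) (φ w : ℝ → ℂ),
      1 ≤ kabs k₁ k₃ →
      ContDiff ℝ 2 φ →
      IntervalIntegrable (fun y => ‖w y‖ ^ 2) MeasureTheory.volume (-1) 1 →
      (∀ y ∈ Set.Icc (-1:ℝ) 1,
        deriv (deriv φ) y - ((kabs k₁ k₃ : ℝ) : ℂ) ^ 2 * φ y = w y) →
      φ (-1) = 0 → φ 1 = 0 →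
      (2 * ((∫ y in (-1:ℝ)..1,
              ‖deriv φ y + 2 * (y : ℂ) * φ y / (1 - (y : ℂ) ^ 2)‖ ^ 2)
            + (kabs k₁ k₃) ^ 2 * ∫ y in (-1:ℝ)..1, ‖φ y‖ ^ 2)
          ≤ (∫ y in (-1:ℝ)..1,
              (((1 - (y : ℂ) ^ 2) * w y + 2 * φ y) * (starRingEnd ℂ) (w y))).re) ∧
      ((∫ y in (-1:ℝ)..1, ‖deriv φ y‖ ^ 2)
            + 2 * (kabs k₁ k₃) ^ 2 * ∫ y in (-1:ℝ)..1, ‖φ y‖ ^ 2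
          ≤ (8 / (kabs k₁ k₃) ^ 2 + 1) *
            (∫ y in (-1:ℝ)..1,
              (((1 - (y : ℂ) ^ 2) * w y + 2 * φ y) * (starRingEnd ℂ) (w y))).re) := by
  intro k₁ k₃ φ w hk hφ _ hw hm h1
  have hK : 0 < (kabs k₁ k₃) ^ 2 := by positivity
  generalize kabs k₁ k₃ = κ at *
  have d1 : ∀ y, HasDerivAt φ (deriv φ y) y := fun y =>
    (hφ.differentiable (by norm_num) y).hasDerivAt
  have hφ' : ContDiff ℝ 1 (deriv φ) := ((contDiff_succ_iff_deriv (n := 1)).1 hφ).2.2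
  have d2 : ∀ y, HasDerivAt (deriv φ) (deriv (deriv φ) y) y := fun y =>
    (hφ'.differentiable (by norm_num) y).hasDerivAt
  have c2 : Continuous (deriv (deriv φ)) := hφ'.continuous_deriv (by norm_num)
  have c0 : Continuous φ := hφ.continuous
  have dre : ∀ (f f' : ℝ → ℂ), (∀ y, HasDerivAt f (f' y) y) →
      ∀ y, HasDerivAt (fun y => (f y).re) ((f' y).re) y := fun f f' h y =>
    Complex.reCLM.hasFDerivAt.comp_hasDerivAt y (h y)
  have dim : ∀ (f f' : ℝ → ℂ), (∀ y, HasDerivAt f (f' y) y) →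
      ∀ y, HasDerivAt (fun y => (f y).im) ((f' y).im) y := fun f f' h y =>
    Complex.imCLM.hasFDerivAt.comp_hasDerivAt y (h y)
  have nsq : ∀ z : ℂ, ‖z‖ ^ 2 = z.re ^ 2 + z.im ^ 2 := fun z => by
    rw [← Complex.normSq_eq_norm_sq, Complex.normSq_apply]; ring
  have key := core (κ ^ 2) hK (fun y => (φ y).re) (fun y => (deriv φ y).re)
    (fun y => (deriv (deriv φ) y).re) (fun y => (φ y).im) (fun y => (deriv φ y).im)
    (fun y => (deriv (deriv φ) y).im) (dre _ _ d1) (dre _ _ d2) (Complex.continuous_re.comp c2)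
    (dim _ _ d1) (dim _ _ d2) (Complex.continuous_im.comp c2) (by simp [h1]) (by simp [hm])
    (by simp [h1]) (by simp [hm])
    ((∫ y in (-1:ℝ)..1,
      (((1 - (y : ℂ) ^ 2) * w y + 2 * φ y) * (starRingEnd ℂ) (w y))).re) (by
    have e : (∫ y in (-1:ℝ)..1, (((1 - (y : ℂ) ^ 2) * w y + 2 * φ y) * (starRingEnd ℂ) (w y)))
        = ∫ y in (-1:ℝ)..1, (((1 - (y : ℂ) ^ 2) * (deriv (deriv φ) y - (κ : ℂ) ^ 2 * φ y)
          + 2 * φ y) * (starRingEnd ℂ) (deriv (deriv φ) y - (κ : ℂ) ^ 2 * φ y)) := by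
      refine intervalIntegral.integral_congr fun y hy => ?_
      rw [Set.uIcc_of_le (by norm_num)] at hy
      simp only [hw y hy]
    rw [e]
    have hi : IntervalIntegrable (fun y : ℝ => (((1 - (y : ℂ) ^ 2) *
        (deriv (deriv φ) y - (κ : ℂ) ^ 2 * φ y)
          + 2 * φ y) * (starRingEnd ℂ) (deriv (deriv φ) y - (κ : ℂ) ^ 2 * φ y))) volume (-1) 1 := by
      apply Continuous.intervalIntegrable
      have := Complex.continuous_conj
      fun_prop
    have := Complex.reCLM.intervalIntegral_comp_comm hi
    simp only [Complex.reCLM_apply] at this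
    rw [← this]
    refine intervalIntegral.integral_congr fun y _ => ?_
    have e1 : (1 - (y : ℂ) ^ 2) = ((1 - y ^ 2 : ℝ) : ℂ) := by push_cast; ring
    have e2 : (κ : ℂ) ^ 2 = ((κ ^ 2 : ℝ) : ℂ) := by push_cast; ring
    simp only [e1, e2, map_sub, map_mul, Complex.conj_ofReal, Complex.mul_re, Complex.mul_im,
      Complex.sub_re, Complex.sub_im,
      Complex.add_re, Complex.add_im, Complex.ofReal_re, Complex.ofReal_im, Complex.conj_re,
      Complex.conj_im, Complex.re_ofNat, Complex.im_ofNat]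
    ring)
  have hψ : ∀ y : ℝ, ‖deriv φ y + 2 * (y : ℂ) * φ y / (1 - (y : ℂ) ^ 2)‖ ^ 2
      = ((deriv φ y).re + 2 * y * ((φ y).re / (1 - y^2)))^2
        + ((deriv φ y).im + 2 * y * ((φ y).im / (1 - y^2)))^2 := fun y => by
    have e1 : 2 * (y : ℂ) * φ y / (1 - (y : ℂ) ^ 2) = ((2 * y / (1 - y ^ 2) : ℝ) : ℂ) * φ y := by
      push_cast; ring
    rw [nsq, e1, Complex.add_re, Complex.add_im, Complex.re_ofReal_mul, Complex.im_ofReal_mul]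
    ring
  simp only [hψ]
  simp only [nsq]
  exact key

end
end

section
/- There exists a constant C > 0, depending only on C₀ (and in particular independent of k, c, c₀, f, a, b), such that the following holds. Let a < b, let f ∈ H¹₀(a,b), let u ∈ C²([a,b]) be real-valued with |u'(y)| ≥ c₀ > 0 and |u''(y)| ≤ C₀ for all y ∈ [a,b], and let c ∈ ℂ \ ℝ. Then for every real α ≥ 1: | ∫_a^b f(y)/(u(y)−c) dy | ≤ C c₀⁻¹ α^{−1/2} ( ‖f'‖_{L²} + α‖f‖_{L²} + c₀⁻¹‖f‖_{L²} ). Moreover, if α ≥ c₀⁻¹, then | ∫_a^b f(y)/(u(y)−c) dy | ≤ C c₀⁻¹ α^{−1/2} ( ‖f'‖_{L²} + α‖f‖_{L²} ). -/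
open Real MeasureTheory

lemma aux_cs (a b : ℝ) (hab : a ≤ b) (g h : ℝ → ℝ) (hg : Continuous g) (hh : Continuous h)
    (g0 : ∀ x, 0 ≤ g x) (h0 : ∀ x, 0 ≤ h x) :
    ∫ y in a..b, g y * h y ≤ √(∫ y in a..b, g y ^ 2) * √(∫ y in a..b, h y ^ 2) := by
  have key : ∀ k : ℝ → ℝ, Continuous k →
      MemLp k (ENNReal.ofReal 2) (volume.restrict (Set.Ioc a b)) := by
    intro k hk
    obtain ⟨M, hM⟩ := (isCompact_Icc (a := a) (b := b)).exists_bound_of_continuousOn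
      hk.continuousOn
    refine MemLp.of_bound hk.aestronglyMeasurable M ?_
    filter_upwards [ae_restrict_mem measurableSet_Ioc] with x hx
    exact hM x (Set.Ioc_subset_Icc_self hx)
  have := integral_mul_le_Lp_mul_Lq_of_nonneg (μ := volume.restrict (Set.Ioc a b))
    (p := 2) (q := 2) Real.HolderConjugate.two_two
    (Filter.Eventually.of_forall g0) (Filter.Eventually.of_forall h0) (key g hg) (key h hh)
  simp only [intervalIntegral.integral_of_le hab]
  simpa [Real.sqrt_eq_rpow] using this

lemma aux_sq (r s t : ℝ) : ‖((t : ℂ) - ⟨r, s⟩)⁻¹‖ ^ 2 = ((t - r) ^ 2 + s ^ 2)⁻¹ := by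
  rw [norm_inv, inv_pow, Complex.sq_norm, Complex.normSq_apply]
  congr 1
  simp
  ring

lemma aux_ne (r s t : ℝ) (hs : s ≠ 0) : ((t : ℂ) - ⟨r, s⟩) ≠ 0 := by
  intro h
  have := congrArg Complex.im h
  simp at this
  exact hs this

lemma aux_kernel (a b c₀ r s : ℝ) (u : ℝ → ℝ) (hab : a < b) (hc : 0 < c₀)
    (hu : ContDiff ℝ 2 u) (h1 : ∀ y ∈ Set.Icc a b, c₀ ≤ |deriv u y|) (hs : s ≠ 0) :
    ∫ y in a..b, ‖((u y : ℂ) - ⟨r, s⟩)⁻¹‖ ^ 2 ≤ π * c₀⁻¹ * |s|⁻¹ := by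
  have hud : Differentiable ℝ u := hu.differentiable (by norm_num)
  have hdc : Continuous (deriv u) := hu.continuous_deriv (by norm_num)
  have hpos : ∀ y, 0 < (u y - r) ^ 2 + s ^ 2 := fun y => by positivity
  have hk : Continuous fun y => ((u y - r) ^ 2 + s ^ 2)⁻¹ :=
    Continuous.inv₀ (by have := hu.continuous; fun_prop) (fun y => (hpos y).ne')
  simp only [aux_sq]
  have hder : ∀ y, HasDerivAt (fun y => s⁻¹ * arctan ((u y - r) / s))
      (deriv u y * ((u y - r) ^ 2 + s ^ 2)⁻¹) y := by
    intro y
    have := ((((hud y).hasDerivAt.sub_const r).div_const s).arctan).const_mul s⁻¹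
    refine this.congr_deriv ?_
    have := (hpos y).ne'
    have h2 : 1 + ((u y - r) / s) ^ 2 ≠ 0 := by positivity
    field_simp
    ring
  have hint : ∫ y in a..b, deriv u y * ((u y - r) ^ 2 + s ^ 2)⁻¹ =
      s⁻¹ * arctan ((u b - r) / s) - s⁻¹ * arctan ((u a - r) / s) :=
    intervalIntegral.integral_eq_sub_of_hasDerivAt (fun y _ => hder y)
      ((hdc.mul hk).intervalIntegrable _ _)
  have hbd : |∫ y in a..b, deriv u y * ((u y - r) ^ 2 + s ^ 2)⁻¹| ≤ |s|⁻¹ * π := by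
    rw [hint, ← mul_sub, abs_mul, abs_inv]
    gcongr
    rw [abs_le]
    have := arctan_lt_pi_div_two ((u b - r) / s)
    have := arctan_lt_pi_div_two ((u a - r) / s)
    have := neg_pi_div_two_lt_arctan ((u b - r) / s)
    have := neg_pi_div_two_lt_arctan ((u a - r) / s)
    constructor <;> linarith
  have hsign : (∀ y ∈ Set.Icc a b, c₀ ≤ deriv u y) ∨ (∀ y ∈ Set.Icc a b, c₀ ≤ - deriv u y) := by
    have hne : ∀ y ∈ Set.Icc a b, deriv u y ≠ 0 := by
      intro y hy h
      have := h1 y hy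
      rw [h, abs_zero] at this
      linarith
    by_contra! hcon
    obtain ⟨⟨x, hx, hx'⟩, ⟨y, hy, hy'⟩⟩ := hcon
    have hx2 : deriv u x < 0 := by
      have := h1 x hx
      by_contra! h
      rw [abs_of_nonneg h] at this
      linarith
    have hy2 : 0 < deriv u y := by
      have := h1 y hy
      by_contra! h
      rw [abs_of_nonpos h] at this
      linarith
    obtain ⟨z, hz, hz0⟩ := isPreconnected_Icc.intermediate_value hx hy hdc.continuousOn
      (⟨hx2.le, hy2.le⟩ : (0:ℝ) ∈ Set.Icc _ _)
    exact hne z hz hz0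
  have hmain : c₀ * ∫ y in a..b, ((u y - r) ^ 2 + s ^ 2)⁻¹ ≤
      |∫ y in a..b, deriv u y * ((u y - r) ^ 2 + s ^ 2)⁻¹| := by
    rw [← intervalIntegral.integral_const_mul]
    rcases hsign with h | h
    · refine le_trans ?_ (le_abs_self _)
      refine intervalIntegral.integral_mono_on hab.le
        ((continuous_const.mul hk).intervalIntegrable _ _)
        ((hdc.mul hk).intervalIntegrable _ _) ?_
      intro y hy
      exact mul_le_mul_of_nonneg_right (h y hy) (inv_nonneg.2 (hpos y).le)
    · refine le_trans ?_ (neg_le_abs _)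
      rw [← intervalIntegral.integral_neg]
      refine intervalIntegral.integral_mono_on hab.le
        ((continuous_const.mul hk).intervalIntegrable _ _)
        ((hdc.mul hk).neg.intervalIntegrable _ _) ?_
      intro y hy
      have := mul_le_mul_of_nonneg_right (h y hy) (inv_nonneg.2 (hpos y).le)
      linarith
  have := hmain.trans hbd
  calc _ = c₀⁻¹ * (c₀ * ∫ y in a..b, ((u y - r) ^ 2 + s ^ 2)⁻¹) := by field_simp
    _ ≤ c₀⁻¹ * (|s|⁻¹ * π) := by gcongr
    _ = _ := by ring

lemma aux_kcont (r s : ℝ) (u : ℝ → ℝ) (hu : Continuous u) (hs : s ≠ 0) :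
    Continuous fun y => ((u y : ℂ) - ⟨r, s⟩)⁻¹ :=
  Continuous.inv₀ (by fun_prop) (fun y => aux_ne r s _ hs)

lemma aux_pair (a b c₀ r s : ℝ) (u : ℝ → ℝ) (g : ℝ → ℂ) (hab : a < b) (hc : 0 < c₀)
    (hu : ContDiff ℝ 2 u) (h1 : ∀ y ∈ Set.Icc a b, c₀ ≤ |deriv u y|) (hs : s ≠ 0)
    (hg : Continuous g) :
    ∫ y in a..b, ‖g y‖ * ‖((u y : ℂ) - ⟨r, s⟩)⁻¹‖ ≤
      √(∫ y in a..b, ‖g y‖ ^ 2) * √(π * c₀⁻¹ * |s|⁻¹) := by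
  refine (aux_cs a b hab.le _ _ hg.norm (aux_kcont r s u hu.continuous hs).norm
    (fun _ => norm_nonneg _) (fun _ => norm_nonneg _)).trans ?_
  gcongr
  exact aux_kernel a b c₀ r s u hab hc hu h1 hs

lemma aux_ibp (a b c₀ C₀ r s : ℝ) (u : ℝ → ℝ) (f : ℝ → ℂ) (hab : a < b) (hc : 0 < c₀)
    (hC : 0 < C₀)
    (hf : ContDiff ℝ 1 f) (fa : f a = 0) (fb : f b = 0)
    (hu : ContDiff ℝ 2 u) (h1 : ∀ y ∈ Set.Icc a b, c₀ ≤ |deriv u y|)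
    (h2 : ∀ y ∈ Set.Icc a b, |deriv (deriv u) y| ≤ C₀) (hs : s ≠ 0) :
    ‖∫ y in a..b, f y * (((u y : ℂ) - ⟨r, s⟩)⁻¹) ^ 2‖ ≤
      c₀⁻¹ * (√(∫ y in a..b, ‖deriv f y‖ ^ 2) + C₀ * c₀⁻¹ * √(∫ y in a..b, ‖f y‖ ^ 2))
       * √(π * c₀⁻¹ * |s|⁻¹) := by
  have hud : Differentiable ℝ u := hu.differentiable (by norm_num)
  have hu' : ContDiff ℝ 1 (deriv u) := by
    have : ContDiff ℝ (1 + 1) u := by norm_num; exact hu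
    exact (contDiff_succ_iff_deriv.1 this).2.2
  have hdc : Continuous (deriv u) := hu'.continuous
  have hddc : Continuous (deriv (deriv u)) := hu'.continuous_deriv le_rfl
  have hfc := hf.continuous
  have hfd : Continuous (deriv f) := hf.continuous_deriv le_rfl
  have hkc := aux_kcont r s u hu.continuous hs
  have hne : ∀ y ∈ Set.Icc a b, deriv u y ≠ 0 := by
    intro y hy h
    have := h1 y hy
    rw [h, abs_zero] at this
    linarith
  set G : ℝ → ℂ := fun y => (deriv f y * ((deriv u y : ℝ) : ℂ)⁻¹
      - f y * ((deriv (deriv u) y : ℝ) : ℂ) * (((deriv u y : ℝ) : ℂ)⁻¹) ^ 2) *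
        ((u y : ℂ) - ⟨r, s⟩)⁻¹ with hG
  have hinvc : ContinuousOn (fun y => ((deriv u y : ℝ) : ℂ)⁻¹) (Set.Icc a b) := by
    refine ContinuousOn.inv₀ (by fun_prop) ?_
    intro y hy
    exact_mod_cast hne y hy
  have hGc : ContinuousOn G (Set.Icc a b) := by
    have := hkc.continuousOn (s := Set.Icc a b)
    refine ContinuousOn.mul (ContinuousOn.sub (hfd.continuousOn.mul hinvc) ?_) this
    refine ContinuousOn.mul (by fun_prop) (hinvc.pow 2)
  have hGi : IntervalIntegrable G volume a b :=
    ContinuousOn.intervalIntegrable (by rwa [Set.uIcc_of_le hab.le])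
  have hHi : IntervalIntegrable (fun y => f y * (((u y : ℂ) - ⟨r, s⟩)⁻¹) ^ 2) volume a b :=
    (hfc.mul (hkc.pow 2)).intervalIntegrable _ _
  have hder : ∀ y ∈ Set.uIcc a b, HasDerivAt
      (fun y => f y * ((deriv u y : ℝ) : ℂ)⁻¹ * ((u y : ℂ) - ⟨r, s⟩)⁻¹)
      (G y - f y * (((u y : ℂ) - ⟨r, s⟩)⁻¹) ^ 2) y := by
    intro y hy
    rw [Set.uIcc_of_le hab.le] at hy
    have e1 := ((hf.differentiable (by norm_num)) y).hasDerivAt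
    have e2 := ((hu'.differentiable (by norm_num)) y).hasDerivAt.ofReal_comp
    have e3 := (hud y).hasDerivAt.ofReal_comp.sub_const (⟨r, s⟩ : ℂ)
    have n2 : ((deriv u y : ℝ) : ℂ) ≠ 0 := by exact_mod_cast hne y hy
    have n3 := aux_ne r s (u y) hs
    refine ((e1.fun_mul (e2.fun_inv n2)).fun_mul (e3.fun_inv n3)).congr_deriv ?_
    simp only [hG]
    field_simp
    ring
  have h0 := intervalIntegral.integral_eq_sub_of_hasDerivAt hder (hGi.sub hHi)
  rw [intervalIntegral.integral_sub hGi hHi, fa, fb] at h0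
  have h0' : ∫ y in a..b, f y * (((u y : ℂ) - ⟨r, s⟩)⁻¹) ^ 2 = ∫ y in a..b, G y := by
    simp only [zero_mul, sub_self] at h0
    exact (sub_eq_zero.1 h0).symm
  rw [h0']
  have p1 := aux_pair a b c₀ r s u _ hab hc hu h1 hs hfd
  have p2 := aux_pair a b c₀ r s u _ hab hc hu h1 hs hfc
  have i1 : IntervalIntegrable (fun y => c₀⁻¹ * (‖deriv f y‖ * ‖((u y : ℂ) - ⟨r, s⟩)⁻¹‖))
    volume a b := (continuous_const.mul (hfd.norm.mul hkc.norm)).intervalIntegrable _ _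
  have i2 : IntervalIntegrable (fun y => C₀ * c₀⁻¹ ^ 2 * (‖f y‖ * ‖((u y : ℂ) - ⟨r, s⟩)⁻¹‖))
    volume a b := (continuous_const.mul (hfc.norm.mul hkc.norm)).intervalIntegrable _ _
  have hb : ‖∫ y in a..b, G y‖ ≤ ∫ y in a..b, (c₀⁻¹ * (‖deriv f y‖ * ‖((u y : ℂ) - ⟨r, s⟩)⁻¹‖)
      + C₀ * c₀⁻¹ ^ 2 * (‖f y‖ * ‖((u y : ℂ) - ⟨r, s⟩)⁻¹‖)) := by
    refine intervalIntegral.norm_integral_le_of_norm_le hab.le ?_ (i1.add i2)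
    refine Filter.Eventually.of_forall fun y hy => ?_
    have hy := Set.Ioc_subset_Icc_self hy
    have q1 : |deriv u y|⁻¹ ≤ c₀⁻¹ := inv_anti₀ hc (h1 y hy)
    have q2 := h2 y hy
    calc ‖G y‖ ≤ (‖deriv f y‖ * |deriv u y|⁻¹ +
            ‖f y‖ * |deriv (deriv u) y| * (|deriv u y|⁻¹) ^ 2) * ‖((u y : ℂ) - ⟨r, s⟩)⁻¹‖ := by
          rw [hG]
          simp only [norm_mul]
          gcongr
          refine (norm_sub_le _ _).trans (le_of_eq ?_)
          simp
      _ ≤ (‖deriv f y‖ * c₀⁻¹ + ‖f y‖ * C₀ * (c₀⁻¹) ^ 2) * ‖((u y : ℂ) - ⟨r, s⟩)⁻¹‖ := by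
          gcongr
      _ = _ := by ring
  rw [intervalIntegral.integral_add i1 i2, intervalIntegral.integral_const_mul,
    intervalIntegral.integral_const_mul] at hb
  refine hb.trans ?_
  have := mul_le_mul_of_nonneg_left p1 (inv_nonneg.2 hc.le)
  have := mul_le_mul_of_nonneg_left p2 (by positivity : 0 ≤ C₀ * c₀⁻¹ ^ 2)
  nlinarith

lemma aux_deriv (a b r σ t : ℝ) (u : ℝ → ℝ) (f : ℝ → ℂ)
    (hf : Continuous f) (hu : Continuous u) (hσ : |σ| = 1) (ht : 0 < t) :
    HasDerivAt (fun t : ℝ => ∫ y in a..b, f y * ((u y : ℂ) - ⟨r, σ * t⟩)⁻¹)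
      ((σ * Complex.I) * ∫ y in a..b, f y * (((u y : ℂ) - ⟨r, σ * t⟩)⁻¹) ^ 2) t := by
  have hσ0 : σ ≠ 0 := by rintro rfl; simp at hσ
  rw [← intervalIntegral.integral_const_mul]
  have hs : Set.Ioi (t / 2) ∈ nhds t := Ioi_mem_nhds (by linarith)
  refine (intervalIntegral.hasDerivAt_integral_of_dominated_loc_of_deriv_le
    (F := fun (t : ℝ) y => f y * ((u y : ℂ) - ⟨r, σ * t⟩)⁻¹)
    (F' := fun (t : ℝ) y => (σ * Complex.I) * (f y * (((u y : ℂ) - ⟨r, σ * t⟩)⁻¹) ^ 2))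
    (bound := fun y => ‖f y‖ * ((t / 2) ^ 2)⁻¹) hs ?_ ?_ ?_ ?_ ?_ ?_).2
  · filter_upwards [hs] with x hx
    have hx : t / 2 < x := hx
    exact (hf.mul (aux_kcont r _ u hu (mul_ne_zero hσ0 (by linarith)))).aestronglyMeasurable
  · exact (hf.mul (aux_kcont r _ u hu (mul_ne_zero hσ0 ht.ne'))).intervalIntegrable _ _
  · exact (continuous_const.mul (hf.mul
      ((aux_kcont r _ u hu (mul_ne_zero hσ0 ht.ne')).pow 2))).aestronglyMeasurable
  · refine Filter.Eventually.of_forall fun y _ x hx => ?_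
    have hx : t / 2 < x := hx
    have hsq : (σ * x) ^ 2 = x ^ 2 := by
      rw [mul_pow, ← sq_abs σ, hσ]; ring
    rw [norm_mul, norm_mul, norm_mul, norm_pow, aux_sq, Complex.norm_I, Complex.norm_real,
      Real.norm_eq_abs, hσ, hsq, one_mul, one_mul]
    gcongr
    nlinarith [sq_nonneg (u y - r)]
  · exact (hf.norm.mul continuous_const).intervalIntegrable _ _
  · refine Filter.Eventually.of_forall fun y _ x hx => ?_
    have hx : t / 2 < x := hx
    have n3 := aux_ne r (σ * x) (u y) (mul_ne_zero hσ0 (by linarith))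
    have e : ∀ x : ℝ, (⟨r, σ * x⟩ : ℂ) = r + σ * Complex.I * x := by
      intro x
      apply Complex.ext <;> simp
    have d : HasDerivAt (fun x : ℝ => (u y : ℂ) - ⟨r, σ * x⟩) (-(σ * Complex.I)) x := by
      simp only [e]
      have := ((((hasDerivAt_id x).ofReal_comp.const_mul (σ * Complex.I)).const_add
        (r : ℂ)).const_sub (u y : ℂ))
      simpa using this
    refine ((d.fun_inv n3).const_mul (f y)).congr_deriv ?_
    field_simp

lemma aux_main (a b c₀ C₀ α : ℝ) (u : ℝ → ℝ) (f : ℝ → ℂ) (c : ℂ) (hab : a < b) (hc : 0 < c₀)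
    (hC : 0 < C₀)
    (hf : ContDiff ℝ 1 f) (fa : f a = 0) (fb : f b = 0)
    (hu : ContDiff ℝ 2 u) (h1 : ∀ y ∈ Set.Icc a b, c₀ ≤ |deriv u y|)
    (h2 : ∀ y ∈ Set.Icc a b, |deriv (deriv u) y| ≤ C₀) (hcim : c.im ≠ 0) (hα : 1 ≤ α) :
    ‖∫ y in a..b, f y / ((u y : ℂ) - c)‖ ≤
      (2 * √π * (1 + C₀)) * c₀⁻¹ * α ^ (-(1:ℝ)/2) *
                (√(∫ y in a..b, ‖deriv f y‖ ^ 2)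
                  + α * √(∫ y in a..b, ‖f y‖ ^ 2)
                  + c₀⁻¹ * √(∫ y in a..b, ‖f y‖ ^ 2)) := by
  obtain ⟨σ, hσ, hσc⟩ : ∃ σ : ℝ, |σ| = 1 ∧ c.im = σ * |c.im| := by
    rcases lt_or_gt_of_ne hcim with h | h
    · exact ⟨-1, by simp, by rw [abs_of_neg h]; ring⟩
    · exact ⟨1, by simp, by rw [abs_of_pos h]; ring⟩
  have hσ0 : σ ≠ 0 := by rintro rfl; simp at hσ
  have hα0 : 0 < α := by linarith
  set s := |c.im| with hs
  have hs0 : 0 < s := abs_pos.2 hcim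
  have hce : c = ⟨c.re, σ * s⟩ := by
    apply Complex.ext
    · rfl
    · exact hσc
  set J : ℝ → ℂ := fun t => ∫ y in a..b, f y * ((u y : ℂ) - ⟨c.re, σ * t⟩)⁻¹ with hJ
  have hI : ∫ y in a..b, f y / ((u y : ℂ) - c) = J s := by
    simp only [hJ, div_eq_mul_inv]
    rw [← hce]
  rw [hI]
  set N := √(∫ y in a..b, ‖f y‖ ^ 2) with hN
  set D := √(∫ y in a..b, ‖deriv f y‖ ^ 2) with hD
  have hN0 : 0 ≤ N := Real.sqrt_nonneg _
  have hD0 : 0 ≤ D := Real.sqrt_nonneg _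
  set l := c₀ / α with hl
  have hl0 : 0 < l := by positivity
  set K := c₀⁻¹ * (D + C₀ * c₀⁻¹ * N) * √(π * c₀⁻¹) with hK
  have hK0 : 0 ≤ K := by positivity
  have habs : ∀ t : ℝ, 0 < t → |σ * t| = t := by
    intro t ht
    rw [abs_mul, hσ, one_mul, abs_of_pos ht]
  have hd : ∀ t : ℝ, 0 < t → HasDerivAt J
      ((σ * Complex.I) * ∫ y in a..b, f y * (((u y : ℂ) - ⟨c.re, σ * t⟩)⁻¹) ^ 2) t :=
    fun t ht => aux_deriv a b c.re σ t u f hf.continuous hu.continuous hσ ht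
  have hbound : ∀ t : ℝ, 0 < t →
      ‖(σ * Complex.I) * ∫ y in a..b, f y * (((u y : ℂ) - ⟨c.re, σ * t⟩)⁻¹) ^ 2‖ ≤
        2 * K * (1 / (2 * √t)) := by
    intro t ht
    have := aux_ibp a b c₀ C₀ c.re (σ * t) u f hab hc hC hf fa fb hu h1 h2
      (mul_ne_zero hσ0 ht.ne')
    rw [habs t ht, Real.sqrt_mul (by positivity), Real.sqrt_inv] at this
    rw [norm_mul, norm_mul, Complex.norm_I, Complex.norm_real, Real.norm_eq_abs, hσ, one_mul,
      one_mul]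
    refine this.trans (le_of_eq ?_)
    rw [hK, hD, hN]
    have : √t ≠ 0 := (Real.sqrt_pos.2 ht).ne'
    field_simp
  have hB : ∀ t : ℝ, 0 < t → HasDerivAt (fun t => 2 * K * (√t - √s)) (2 * K * (1 / (2 * √t))) t :=
    fun t ht => ((Real.hasDerivAt_sqrt ht.ne').sub_const _).const_mul _
  have hdiff : ‖J (s + l) - J s‖ ≤ 2 * K * (√(s + l) - √s) := by
    have hpos : ∀ t ∈ Set.Icc s (s + l), 0 < t := fun t ht => hs0.trans_le ht.1
    refine image_norm_le_of_norm_deriv_right_le_deriv_boundary' (a := s) (b := s + l)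
      (f := fun t => J t - J s)
      (f' := fun t => (σ * Complex.I) * ∫ y in a..b, f y * (((u y : ℂ) - ⟨c.re, σ * t⟩)⁻¹) ^ 2)
      (B := fun t => 2 * K * (√t - √s)) (B' := fun t => 2 * K * (1 / (2 * √t)))
      ?_ ?_ ?_ ?_ ?_ ?_ (Set.right_mem_Icc.2 (by linarith))
    · intro t ht
      exact ((hd t (hpos t ht)).sub_const _).continuousAt.continuousWithinAt
    · intro t ht
      exact ((hd t (hpos t (Set.Ico_subset_Icc_self ht))).sub_const _).hasDerivWithinAt
    · simp
    · intro t ht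
      exact (hB t (hpos t ht)).continuousAt.continuousWithinAt
    · intro t ht
      exact (hB t (hpos t (Set.Ico_subset_Icc_self ht))).hasDerivWithinAt
    · intro t ht
      exact hbound t (hpos t (Set.Ico_subset_Icc_self ht))
  have hsq : √(s + l) - √s ≤ √l := by
    rw [sub_le_iff_le_add]
    apply Real.sqrt_le_iff.2
    refine ⟨by positivity, ?_⟩
    nlinarith [Real.sq_sqrt hs0.le, Real.sq_sqrt hl0.le,
      mul_nonneg (Real.sqrt_nonneg s) (Real.sqrt_nonneg l)]
  have hT : ‖J (s + l)‖ ≤ N * √(π * c₀⁻¹ * l⁻¹) := by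
    have hp : 0 < s + l := by positivity
    have := aux_pair a b c₀ c.re (σ * (s + l)) u f hab hc hu h1
      (mul_ne_zero hσ0 hp.ne') hf.continuous
    rw [habs _ hp] at this
    refine le_trans ?_ (this.trans ?_)
    · refine (intervalIntegral.norm_integral_le_integral_norm hab.le).trans (le_of_eq ?_)
      simp only [norm_mul]
    · gcongr
      linarith
  set A := √α with hA
  have hA0 : 0 < A := Real.sqrt_pos.2 hα0
  have hAA : α = A ^ 2 := (Real.sq_sqrt hα0.le).symm
  have hpow : α ^ (-(1:ℝ)/2) = A⁻¹ := by
    rw [neg_div, Real.rpow_neg hα0.le, hA, Real.sqrt_eq_rpow]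
  have e1 : √(π * c₀⁻¹ * l⁻¹) = √π * c₀⁻¹ * A := by
    rw [hl, show π * c₀⁻¹ * (c₀ / α)⁻¹ = π * (c₀⁻¹ ^ 2) * α by field_simp,
      Real.sqrt_mul (by positivity), Real.sqrt_mul (by positivity), Real.sqrt_sq (by positivity)]
  have e2 : √(π * c₀⁻¹) * √l = √π * A⁻¹ := by
    rw [← Real.sqrt_mul (by positivity), hl, show π * c₀⁻¹ * (c₀ / α) = π * α⁻¹ by field_simp,
      Real.sqrt_mul (by positivity), Real.sqrt_inv]
  have e3 : K * √l = c₀⁻¹ * (D + C₀ * c₀⁻¹ * N) * (√π * A⁻¹) := by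
    rw [hK, mul_assoc, e2]
  have hfin : ‖J s‖ ≤ N * (√π * c₀⁻¹ * A) + 2 * (c₀⁻¹ * (D + C₀ * c₀⁻¹ * N) * (√π * A⁻¹)) := by
    have t1 : ‖J s‖ ≤ ‖J (s + l)‖ + ‖J (s + l) - J s‖ := by
      have := norm_sub_le (J (s + l)) (J (s + l) - J s)
      simpa using this
    have t2 := mul_le_mul_of_nonneg_left hsq (by positivity : 0 ≤ 2 * K)
    rw [e1] at hT
    rw [← e3]
    linarith
  refine hfin.trans ?_
  rw [hpow, hAA]
  have hmul : 0 ≤ √π * c₀⁻¹ * A⁻¹ := by positivity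
  have hAi : A = A⁻¹ * A ^ 2 := by field_simp
  calc N * (√π * c₀⁻¹ * A) + 2 * (c₀⁻¹ * (D + C₀ * c₀⁻¹ * N) * (√π * A⁻¹))
      = √π * c₀⁻¹ * A⁻¹ * (A ^ 2 * N + 2 * D + 2 * C₀ * (c₀⁻¹ * N)) := by
        field_simp
        ring
    _ ≤ √π * c₀⁻¹ * A⁻¹ * (2 * (1 + C₀) * (D + A ^ 2 * N + c₀⁻¹ * N)) := by
        refine mul_le_mul_of_nonneg_left ?_ hmul
        have x1 : 0 ≤ A ^ 2 * N := by positivity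
        have x2 : 0 ≤ c₀⁻¹ * N := by positivity
        nlinarith [mul_nonneg hC.le x1, mul_nonneg hC.le x2, mul_nonneg hC.le hD0]
    _ = _ := by ring

/-- **Hardy-type estimate via the limiting absorption principle**
(Lemma C.3): for `f ∈ H¹₀(a,b)`, `u ∈ C²([a,b])` real with `|u'| ≥ c₀ > 0`
and `|u''| ≤ C₀`, and `c ∈ ℂ∖ℝ`, for every `α ≥ 1`:
`|∫_a^b f/(u-c)| ≤ C c₀⁻¹ α^{-1/2}(‖f'‖ + α‖f‖ + c₀⁻¹‖f‖)`, and if moreover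
`α ≥ c₀⁻¹` then `|∫_a^b f/(u-c)| ≤ C c₀⁻¹ α^{-1/2}(‖f'‖ + α‖f‖)`, where
`C` depends only on `C₀`. -/
theorem hardy_type_limiting_absorption :
    ∀ C₀ : ℝ, 0 < C₀ →
      ∃ C : ℝ, 0 < C ∧
        ∀ (a b c₀ α : ℝ) (f : ℝ → ℂ) (u : ℝ → ℝ) (c : ℂ),
          a < b → 0 < c₀ →
          ContDiff ℝ 1 f → f a = 0 → f b = 0 →
          ContDiff ℝ 2 u →
          (∀ y ∈ Set.Icc a b, c₀ ≤ |deriv u y|) →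
          (∀ y ∈ Set.Icc a b, |deriv (deriv u) y| ≤ C₀) →
          c.im ≠ 0 →
          1 ≤ α →
          (‖∫ y in a..b, f y / ((u y : ℂ) - c)‖ ≤
              C * c₀⁻¹ * α ^ (-(1:ℝ)/2) *
                (Real.sqrt (∫ y in a..b, ‖deriv f y‖ ^ 2)
                  + α * Real.sqrt (∫ y in a..b, ‖f y‖ ^ 2)
                  + c₀⁻¹ * Real.sqrt (∫ y in a..b, ‖f y‖ ^ 2))) ∧
          (c₀⁻¹ ≤ α →
            ‖∫ y in a..b, f y / ((u y : ℂ) - c)‖ ≤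
              C * c₀⁻¹ * α ^ (-(1:ℝ)/2) *
                (Real.sqrt (∫ y in a..b, ‖deriv f y‖ ^ 2)
                  + α * Real.sqrt (∫ y in a..b, ‖f y‖ ^ 2))) := by
  intro C₀ hC
  refine ⟨2 * (2 * √π * (1 + C₀)), by positivity, ?_⟩
  intro a b c₀ α f u c hab hc hf fa fb hu h1 h2 hcim hα
  have key := aux_main a b c₀ C₀ α u f c hab hc hC hf fa fb hu h1 h2 hcim hα
  set N := √(∫ y in a..b, ‖f y‖ ^ 2) with hN
  set D := √(∫ y in a..b, ‖deriv f y‖ ^ 2) with hD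
  have hN0 : 0 ≤ N := Real.sqrt_nonneg _
  have hD0 : 0 ≤ D := Real.sqrt_nonneg _
  have hα0 : 0 < α := by linarith
  have hM : 0 ≤ (2 * √π * (1 + C₀)) * c₀⁻¹ * α ^ (-(1:ℝ)/2) := by positivity
  have hx : 0 ≤ α * N := by positivity
  have hy : 0 ≤ c₀⁻¹ * N := by positivity
  refine ⟨key.trans ?_, fun h => key.trans ?_⟩
  · have := mul_nonneg hM (by positivity : 0 ≤ D + α * N + c₀⁻¹ * N)
    linarith
  · have h3 : c₀⁻¹ * N ≤ α * N := by gcongr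
    have := mul_le_mul_of_nonneg_left
      (by linarith : D + α * N + c₀⁻¹ * N ≤ 2 * (D + α * N)) hM
    linarith
end
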